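/- Let α ∈ D and let γ be a monomial with α + γ ∈ ⟨𝓕⟩. Then the monomial c_{4n} s_n does not divide γ. -/

import Mathlib

open MvPolynomial

/-- Monomials in the variables `σ`, represented by their exponent vectors. -/
abbrev Mon (σ : Type*) := σ →₀ ℕ

/-- A monomial order: a total order on monomials such that `1 ≼ t` for every monomial `t`
and `t ≼ u → t·v ≼ u·v` (written additively on exponent vectors). -/
structure MonOrd (σ : Type*) where
  le : Mon σ → Mon σ → Prop
  le_refl : ∀ t, le t t
  le_trans : ∀ t u v, le t u → le u v → le t v
  le_antisymm : ∀ t u, le t u → le u t → t = u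
  le_total : ∀ t u, le t u ∨ le u t
  zero_le : ∀ t, le 0 t
  add_le_add : ∀ t u v, le t u → le (t + v) (u + v)

/-- Strict version of a monomial order. -/
def MonOrd.lt {σ : Type*} (μ : MonOrd σ) (t u : Mon σ) : Prop := μ.le t u ∧ t ≠ u

/-- The extension of a monomial order (given by the relation `r` on monomials) to polynomials:
`g ≼ f` iff `g = f` or the greatest monomial on which `f` and `g` differ occurs in `f`.
(This is the closed form of the recursive definition: `g ≼ f` iff `g = f`, or
`HT g ≺ HT f`, or `HT g = HT f` and `g - HT g ≼ f - HT f`, with `0` the least polynomial.) -/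
def polyLe {σ : Type*} (r : Mon σ → Mon σ → Prop) (g f : MvPolynomial σ (ZMod 2)) : Prop :=
  g = f ∨ ∃ t, t ∈ f.support ∧ t ∉ g.support ∧
    ∀ u : Mon σ, ((u ∈ f.support ∧ u ∉ g.support) ∨ (u ∈ g.support ∧ u ∉ f.support)) → r u t

/-- Strict extension of a monomial order to polynomials. -/
def polyLt {σ : Type*} (r : Mon σ → Mon σ → Prop) (g f : MvPolynomial σ (ZMod 2)) : Prop :=
  polyLe r g f ∧ g ≠ f

/-- `S_F`: the set of non-residual polynomials with respect to `F` and the monomial order `r`,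
i.e. those `f` admitting a `g` with `f + g ∈ ⟨F⟩` and `g ≺ f`. -/
def SF {σ : Type*} (r : Mon σ → Mon σ → Prop) (F : Set (MvPolynomial σ (ZMod 2))) :
    Set (MvPolynomial σ (ZMod 2)) :=
  {f | ∃ g, f + g ∈ Ideal.span F ∧ polyLt r g f}

/-- `t` is the head monomial (`r`-greatest monomial) of the polynomial `f`. -/
def IsHT {σ : Type*} (r : Mon σ → Mon σ → Prop) (f : MvPolynomial σ (ZMod 2)) (t : Mon σ) :
    Prop :=
  t ∈ f.support ∧ ∀ u ∈ f.support, r u t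

/-- `HT(S)`: the set of head monomials (as polynomials) of the nonzero elements of `S`. -/
def HTset {σ : Type*} (r : Mon σ → Mon σ → Prop) (S : Set (MvPolynomial σ (ZMod 2))) :
    Set (MvPolynomial σ (ZMod 2)) :=
  {p | ∃ f ∈ S, f ≠ 0 ∧ ∃ t, IsHT r f t ∧ p = monomial t 1}

/-- The divisibility (componentwise) order `◁` on monomials. -/
def triMon {σ : Type*} (t u : Mon σ) : Prop := ∀ x, t x ≤ u x

/-- The order `◁` on polynomials: `p ◁ q` iff there is an injective map `φ` from the
monomials of `p` to the monomials of `q` with `t ◁ φ t` for each monomial `t` of `p`. -/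
def triPoly {σ : Type*} (p q : MvPolynomial σ (ZMod 2)) : Prop :=
  ∃ φ : Mon σ → Mon σ, Set.InjOn φ ↑p.support ∧ ∀ t ∈ p.support, φ t ∈ q.support ∧ triMon t (φ t)

/-- Upward closure with respect to `◁`. -/
def upClo {σ : Type*} (A : Set (MvPolynomial σ (ZMod 2))) : Set (MvPolynomial σ (ZMod 2)) :=
  {q | ∃ p ∈ A, triPoly p q}

/-- `Min_◁(A)`: the `◁`-minimal elements of `A`. -/
def minTri {σ : Type*} (A : Set (MvPolynomial σ (ZMod 2))) : Set (MvPolynomial σ (ZMod 2)) :=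
  {p | p ∈ A ∧ ∀ q ∈ A, triPoly q p → q = p}

/-- `G` is a Gröbner basis of the ideal `I` with respect to the monomial order `r`. -/
def IsGB {σ : Type*} (r : Mon σ → Mon σ → Prop) (G : Finset (MvPolynomial σ (ZMod 2)))
    (I : Ideal (MvPolynomial σ (ZMod 2))) : Prop :=
  (↑G : Set (MvPolynomial σ (ZMod 2))) ⊆ ↑I ∧
    Ideal.span (↑G : Set (MvPolynomial σ (ZMod 2))) = I ∧
    Ideal.span (HTset r (↑I : Set (MvPolynomial σ (ZMod 2)))) = Ideal.span (HTset r ↑G)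

/-- `G` is a reduced Gröbner basis of `I` with respect to `r`. -/
def IsReducedGB {σ : Type*} (r : Mon σ → Mon σ → Prop) (G : Finset (MvPolynomial σ (ZMod 2)))
    (I : Ideal (MvPolynomial σ (ZMod 2))) : Prop :=
  IsGB r G I ∧ ∀ f ∈ G, ¬ ∀ t ∈ f.support,
    (monomial t 1 : MvPolynomial σ (ZMod 2)) ∈
      Ideal.span (HTset r ((↑G : Set (MvPolynomial σ (ZMod 2))) \ {f}))

/-- The variable set `X`: the special variables `s, ℓ, c, c̄, b, b̄` together with, for each
`0 ≤ i ≤ n`, the variables `s_i, f_i, q_{ji}, c_{ji}, b_{ji}` (`1 ≤ j ≤ 4`, encoded by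
`j : Fin 4`) and their barred copies (`bar = true`). -/
inductive MVar (n : ℕ) : Type where
  | vs | vl | vc | vcb | vb | vbb
  | vS (bar : Bool) (i : Fin (n+1))
  | vF (bar : Bool) (i : Fin (n+1))
  | vQ (bar : Bool) (j : Fin 4) (i : Fin (n+1))
  | vC (bar : Bool) (j : Fin 4) (i : Fin (n+1))
  | vB (bar : Bool) (j : Fin 4) (i : Fin (n+1))
deriving DecidableEq

open MVar

abbrev MPoly (n : ℕ) := MvPolynomial (MVar n) (ZMod 2)

/-- `e(n) = 2^(2^n)`. -/
def en (n : ℕ) : ℕ := 2 ^ 2 ^ n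

/-- The set `P_0` (barred copy if `bar = true`). -/
def P0 (n : ℕ) (bar : Bool) : Set (MPoly n) :=
  {p | ∃ j : Fin 4, p =
    X (vB bar j 0) ^ 2 * X (vC bar j 0) * X (vF bar 0) + X (vC bar j 0) * X (vS bar 0)}

/-- The set `P_m` for `m = i+1`, `i : Fin n` (barred copy if `bar = true`).
Here `i.succ` plays the role of `m` and `i.castSucc` the role of `m-1`; the indices
`1,2,3,4` of the paper are encoded as `0,1,2,3 : Fin 4`. -/
def Pm (n : ℕ) (bar : Bool) (i : Fin n) : Set (MPoly n) :=
  ({ X (vQ bar 0 i.succ) * X (vC bar 0 i.castSucc) * X (vS bar i.castSucc) + X (vS bar i.succ),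
    X (vQ bar 1 i.succ) * X (vC bar 1 i.castSucc) * X (vS bar i.castSucc)
      + X (vQ bar 0 i.succ) * X (vB bar 0 i.castSucc) * X (vC bar 0 i.castSucc)
        * X (vF bar i.castSucc),
    X (vQ bar 2 i.succ) * X (vC bar 2 i.castSucc) * X (vF bar i.castSucc)
      + X (vQ bar 1 i.succ) * X (vC bar 1 i.castSucc) * X (vF bar i.castSucc),
    X (vQ bar 2 i.succ) * X (vB bar 0 i.castSucc) * X (vC bar 2 i.castSucc)
        * X (vS bar i.castSucc)
      + X (vQ bar 1 i.succ) * X (vB bar 3 i.castSucc) * X (vC bar 1 i.castSucc)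
        * X (vS bar i.castSucc),
    X (vQ bar 3 i.succ) * X (vB bar 3 i.castSucc) * X (vC bar 3 i.castSucc)
        * X (vF bar i.castSucc)
      + X (vQ bar 2 i.succ) * X (vC bar 2 i.castSucc) * X (vS bar i.castSucc),
    X (vQ bar 3 i.succ) * X (vC bar 3 i.castSucc) * X (vS bar i.castSucc)
      + X (vF bar i.succ) } : Set (MPoly n))
  ∪ {p | ∃ j : Fin 4, p =
      X (vQ bar 1 i.succ) * X (vB bar 2 i.castSucc) * X (vB bar j i.succ) * X (vC bar j i.succ)
          * X (vF bar i.castSucc)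
        + X (vQ bar 1 i.succ) * X (vB bar 1 i.castSucc) * X (vC bar j i.succ)
          * X (vF bar i.castSucc)}

/-- The set `P = P_0 ∪ P_1 ∪ ⋯ ∪ P_n`; for `bar = true` this is the barred copy `P̄`
(the image of `P` under the substitution replacing each variable by its barred version). -/
def PP (n : ℕ) (bar : Bool) : Set (MPoly n) := P0 n bar ∪ ⋃ i : Fin n, Pm n bar i

/-- The set `G` of seven extra binomials. -/
def GG (n : ℕ) : Set (MPoly n) :=
  { X (vB false 3 (Fin.last n)) * X vl * X vb + X vl * X vc,
    X (vB false 3 (Fin.last n)) * X vl * X vbb + X vl * X vcb,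
    X (vC false 3 (Fin.last n)) * X (vF false (Fin.last n)) + X vl,
    X (vC true 3 (Fin.last n)) * X (vF true (Fin.last n))
      + X (vC false 3 (Fin.last n)) * X (vS false (Fin.last n)),
    X (vB true 3 (Fin.last n)) * X (vC false 3 (Fin.last n)) * X (vS false (Fin.last n))
      + X (vC false 3 (Fin.last n)) * X (vS false (Fin.last n)) * X vb,
    X (vB true 3 (Fin.last n)) * X (vC false 3 (Fin.last n)) * X (vS false (Fin.last n))
      + X (vC false 3 (Fin.last n)) * X (vS false (Fin.last n)) * X vbb,
    X (vC true 3 (Fin.last n)) * X (vS true (Fin.last n)) + X vs }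

/-- The set `𝓕 = P ∪ P̄ ∪ G`. -/
def FF (n : ℕ) : Set (MPoly n) := PP n false ∪ PP n true ∪ GG n

/-- The set `C = {ℓ c̄^{m1} c^{m2} : m1 + m2 = e(n)}` of monomials. -/
def Cmon (n : ℕ) : Set (Mon (MVar n)) :=
  {α | ∃ m1 m2 : ℕ, m1 + m2 = en n ∧
    α = Finsupp.single vl 1 + Finsupp.single vcb m1 + Finsupp.single vc m2}

/-- The set `D = {ℓ^j c̄^{m1} c^{m2} : j ∈ {0,1}, j + m1 + m2 ≤ e(n)}` of monomials. -/
def Dmon (n : ℕ) : Set (Mon (MVar n)) :=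
  {α | ∃ j m1 m2 : ℕ, j ≤ 1 ∧ j + m1 + m2 ≤ en n ∧
    α = Finsupp.single vl j + Finsupp.single vcb m1 + Finsupp.single vc m2}

/-- An injective rank function on the variables realizing the variable ordering
(from least to greatest): `s, c, c̄, ℓ, b, b̄`; then `s_0,…,s_n`; `f_0,…,f_n`;
`c_{10},…,c_{1n}; …; c_{40},…,c_{4n}`; `b_{10},…,b_{4n}`; `q_{10},…,q_{4n}`;
then the barred variables in the same pattern. -/
def vrank (n : ℕ) : MVar n → ℕ
  | .vs => 0
  | .vc => 1
  | .vcb => 2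
  | .vl => 3
  | .vb => 4
  | .vbb => 5
  | .vS bar i => 6 + (cond bar (14 * (n+1)) 0) + (i : ℕ)
  | .vF bar i => 6 + (cond bar (14 * (n+1)) 0) + (n+1) + (i : ℕ)
  | .vC bar j i => 6 + (cond bar (14 * (n+1)) 0) + 2*(n+1) + (j : ℕ)*(n+1) + (i : ℕ)
  | .vB bar j i => 6 + (cond bar (14 * (n+1)) 0) + 6*(n+1) + (j : ℕ)*(n+1) + (i : ℕ)
  | .vQ bar j i => 6 + (cond bar (14 * (n+1)) 0) + 10*(n+1) + (j : ℕ)*(n+1) + (i : ℕ)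

/-- The lexicographic monomial order on `X`: `t ≼_lex u` iff `t = u` or the exponents differ
somewhere and at the greatest variable (w.r.t. `vrank`) where they differ, the exponent of
`t` is smaller. -/
def lexLe (n : ℕ) (t u : Mon (MVar n)) : Prop :=
  t = u ∨ ∃ x : MVar n, t x < u x ∧ ∀ y : MVar n, vrank n x < vrank n y → t y = u y

/-- The total degree of a monomial. -/
def mdeg {σ : Type*} (t : Mon σ) : ℕ := t.sum fun _ k => k

/-- The degree lexicographic monomial order. -/
def degLexLe (n : ℕ) (t u : Mon (MVar n)) : Prop :=
  mdeg t < mdeg u ∨ (mdeg t = mdeg u ∧ lexLe n t u)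

/-- Weighted degree of a monomial with respect to a weight map `w`. -/
noncomputable def wdeg {n : ℕ} (w : MVar n → ℝ) (t : Mon (MVar n)) : ℝ :=
  t.sum fun x k => (k : ℝ) * w x

/-- The weighted monomial order determined by the weight map `w`. -/
def wLe {n : ℕ} (w : MVar n → ℝ) (t u : Mon (MVar n)) : Prop := t = u ∨ wdeg w t < wdeg w u

/-!
Modulo `⟨P⟩` the monomial `c_{im} s_m` equals `b_{im} ^ e(m) c_{im} f_m`: level `m` performs
`e(m) = e(m-1) ^ 2` steps by running the computation of level `m - 1` in a doubly nested loop. Every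
monomial met on the way can be read, by recursion on the levels, as the final monomial
`c_{im} b_m ^ β f_m` which it leads to. Having the same reading in every context is a congruence of
monomials, and the two terms of each binomial in `P` are congruent. The same becomes true for
`P̄ ∪ G` after substituting `c_{4n} f_n` for `ℓ`, `b_{4n}` for `c` and `c̄`, `c_{4n} s_n` for `s`,
`s̄_i` and `f̄_i`, and `1` for `b`, `b̄` and the other barred variables. Hence `α + γ ∈ ⟨𝓕⟩` forces
`α` and `γ` to be congruent.

If `γ` were a multiple of `c_{4n} s_n`, then for `j = 1` the reading of `α` would have the exponent
`m₁ + m₂ < e(n)` of `b_{4n}`, but that of `γ` an exponent at least `e(n)`. For `j = 0` consider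
`α` and `γ` in the context `c_{4n} f_n`: the first product has a reading, the second one has none
because it contains `c_{4n} ^ 2`.
-/

section MonomialMaps

variable {σ R M : Type*} [CommRing R] [AddCommMonoid M]

/-- The ring homomorphism from polynomials to the monoid algebra of `M` that sends the monomial
with exponent vector `a` to the basis element `f a`; it kills a binomial exactly when `f` identifies
its two exponent vectors. -/
noncomputable def monomialHom (R : Type*) [CommRing R] (f : (σ →₀ ℕ) →+ M) :
    MvPolynomial σ R →+* AddMonoidAlgebra R M :=
  AddMonoidAlgebra.mapDomainRingHom R f

@[simp]
lemma monomialHom_monomial (f : (σ →₀ ℕ) →+ M) (a : σ →₀ ℕ) (r : R) :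
    monomialHom R f (monomial a r) = AddMonoidAlgebra.single (f a) r :=
  AddMonoidAlgebra.mapDomain_single

@[simp]
lemma monomialHom_X (f : (σ →₀ ℕ) →+ M) (i : σ) :
    monomialHom R f (X i) = AddMonoidAlgebra.single (f (Finsupp.single i 1)) 1 :=
  monomialHom_monomial f _ _

lemma single_add_single_eq_zero [CharP R 2] {a b : M} (h : a = b) {r : R} :
    (AddMonoidAlgebra.single a r + AddMonoidAlgebra.single b r : AddMonoidAlgebra R M) = 0 := by
  rw [h, ← AddMonoidAlgebra.single_add, CharTwo.add_self_eq_zero, AddMonoidAlgebra.single_zero]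

lemma map_eq_map_of_monomial_sub_monomial_mem_span [Nontrivial R] (f : (σ →₀ ℕ) →+ M)
    {F : Set (MvPolynomial σ R)} (hF : ∀ p ∈ F, monomialHom R f p = 0) {a b : σ →₀ ℕ}
    (h : monomial a 1 - monomial b 1 ∈ Ideal.span F) : f a = f b := by
  have hker : Ideal.span F ≤ RingHom.ker (monomialHom R f) := Ideal.span_le.2 hF
  have hab : monomialHom R f (monomial a 1) = monomialHom R f (monomial b 1) :=
    (RingHom.sub_mem_ker_iff _).1 (hker h)
  rw [monomialHom_monomial, monomialHom_monomial] at hab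
  exact AddMonoidAlgebra.single_left_injective one_ne_zero hab

end MonomialMaps

lemma pi_single_one_add_eq_single_one_iff {ι : Type*} [DecidableEq ι] {i j : ι} {w : ι → ℕ} :
    Pi.single i 1 + w = Pi.single j 1 ↔ i = j ∧ w = 0 := by
  refine ⟨fun h => ?_, by rintro ⟨rfl, rfl⟩; simp⟩
  obtain rfl : i = j := by
    by_contra hij
    simpa [hij] using congrFun h i
  exact ⟨rfl, by simpa using h⟩

lemma en_succ (m : ℕ) : en (m + 1) = en m * en m := by
  rw [en, en, pow_succ, pow_mul, sq, ← mul_pow]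

/-- The two ends `s` and `f` of the computation performed at a level. -/
inductive Endpoint
  | start
  | finish
deriving DecidableEq

/-- The exponent `t` for which `s_m` (or trivially `f_m`), once multiplied by
a selector `c_{im}`, equals `b_{im}^t f_m` modulo `⟨P⟩`. -/
def Endpoint.value (m : ℕ) : Endpoint → ℕ
  | .start => en m
  | .finish => 0

/-- The control symbols of a level: the endpoints `s`, `f` and the phases `q_j`. -/
inductive Control
  | endpoint (e : Endpoint)
  | phase (j : Fin 4)
deriving DecidableEq

/-- Monomials in the variables `V_0, V_1, …`, as a family indexed by the levels: the value at `m`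
lists the exponents of the control symbols `s_m, f_m, q_{jm}`, of the selectors `c_{jm}` and of the
counters `b_{jm}`. Here and below `j : Fin 4` stands for the index `j + 1` of the paper. -/
abbrev CounterConfig := ℕ → (Control → ℕ) × (Fin 4 → ℕ) × (Fin 4 → ℕ)

namespace CounterConfig

/-- The exponents of `s_m, f_m, q_{jm}`. -/
@[simp] def control (x : CounterConfig) (m : ℕ) : Control → ℕ := (x m).1

/-- The exponents of `c_{jm}`. -/
@[simp] def selector (x : CounterConfig) (m : ℕ) : Fin 4 → ℕ := (x m).2.1

/-- The exponents of `b_{jm}`. -/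
@[simp] def counter (x : CounterConfig) (m : ℕ) : Fin 4 → ℕ := (x m).2.2

/-- The variable `s_m` or `f_m`. -/
abbrev tok (e : Endpoint) (m : ℕ) : CounterConfig := Pi.single m (Pi.single (.endpoint e) 1, 0, 0)

/-- The variable `q_{jm}`. -/
abbrev q (j : Fin 4) (m : ℕ) : CounterConfig := Pi.single m (Pi.single (.phase j) 1, 0, 0)

/-- The variable `c_{jm}`. -/
abbrev c (j : Fin 4) (m : ℕ) : CounterConfig := Pi.single m (0, Pi.single j 1, 0)

/-- The monomial `∏ j, b_{jm} ^ β j`. -/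
abbrev b (β : Fin 4 → ℕ) (m : ℕ) : CounterConfig := Pi.single m (0, 0, β)

/-- In phase `j` of a level, counters `β` with which the level below finishes leave `t` steps to be
performed, where `e` is the capacity of the level below. These are the invariants of a doubly nested
loop: counter 0 holds the blocks of `e` steps not yet begun and counter 3 the finished ones; in the
phases 1 and 2 one block is in progress, counter 1 holding its remaining steps and counter 2 its
completed ones. -/
def PhaseValue (e : ℕ) : Fin 4 → (Fin 4 → ℕ) → ℕ → Prop
  | 0, β, t | 3, β, t => β 0 + β 3 = e ∧ β 1 = 0 ∧ β 2 = 0 ∧ t = e * β 0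
  | 1, β, t | 2, β, t => β 0 + β 3 + 1 = e ∧ β 1 + β 2 = e ∧ t = β 1 + e * β 0

section PhaseValue

variable {e t : ℕ} {β : Fin 4 → ℕ}

lemma fin_four_eq_zero_iff : β = 0 ↔ β 0 = 0 ∧ β 1 = 0 ∧ β 2 = 0 ∧ β 3 = 0 := by
  simp [funext_iff, Fin.forall_fin_succ]

lemma phaseValue_zero_start :
    PhaseValue e 0 (β + Pi.single 0 e) t ↔ β = 0 ∧ t = e * e := by
  rw [fin_four_eq_zero_iff]
  simp only [PhaseValue, Pi.add_apply, Pi.single_apply]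
  grind

lemma phaseValue_three_start :
    PhaseValue e 3 (β + Pi.single 3 e) t ↔ β = 0 ∧ t = 0 := by
  rw [fin_four_eq_zero_iff]
  simp only [PhaseValue, Pi.add_apply, Pi.single_apply]
  grind

lemma phaseValue_one_start_iff_zero_finish :
    PhaseValue e 1 (β + Pi.single 1 e) t ↔ PhaseValue e 0 (Pi.single 0 1 + β) t := by
  simp only [PhaseValue, Pi.add_apply, Pi.single_apply, mul_add]
  grind

lemma phaseValue_two_start_iff_one_start :
    PhaseValue e 2 (Pi.single 0 1 + β + Pi.single 2 e) t ↔
      PhaseValue e 1 (Pi.single 3 1 + β + Pi.single 1 e) t := by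
  simp only [PhaseValue, Pi.add_apply, Pi.single_apply]
  grind

lemma phaseValue_three_finish_iff_two_start :
    PhaseValue e 3 (Pi.single 3 1 + β) t ↔ PhaseValue e 2 (β + Pi.single 2 e) t := by
  simp only [PhaseValue, Pi.add_apply, Pi.single_apply]
  grind

lemma phaseValue_one_succ :
    PhaseValue e 1 (Pi.single 1 1 + β) t ↔
      ∃ t', t = t' + 1 ∧ PhaseValue e 1 (Pi.single 2 1 + β) t' := by
  simp only [PhaseValue, Pi.add_apply, Pi.single_apply]
  grind

end PhaseValue

/-- All exponents at the levels below `m` are zero. -/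
def VanishesBelow (x : CounterConfig) (m : ℕ) : Prop := ∀ k < m, x k = 0

/-- `HasValue x m t` says that the part of `x` up to level `m`, without the selectors and counters
of level `m`, is a configuration of the computation of level `m` that will still increase the
selected counter of this level by `t`. -/
inductive HasValue (x : CounterConfig) : ℕ → ℕ → Prop
  | endpoint {m : ℕ} {e : Endpoint} (hctrl : control x m = Pi.single (.endpoint e) 1)
      (hlow : VanishesBelow x m) : HasValue x m (e.value m)
  | phase {m : ℕ} {j : Fin 4} {t t' : ℕ} (hctrl : control x (m + 1) = Pi.single (.phase j) 1)
      (hsel : selector x m = Pi.single j 1) (hval : HasValue x m t)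
      (ht' : PhaseValue (en m) j (counter x m + Pi.single j t) t') : HasValue x (m + 1) t'

/-- `Reads x m i β` says that the computation of level `m` described by `x` selects counter `i` and
ends with counters `β`, that is, at `c_{im} b_m ^ β f_m`. -/
def Reads (x : CounterConfig) (m : ℕ) (i : Fin 4) (β : Fin 4 → ℕ) : Prop :=
  selector x m = Pi.single i 1 ∧ ∃ t, HasValue x m t ∧ β = counter x m + Pi.single i t

section HasValue

variable {k m t : ℕ} {e : Endpoint} {j : Fin 4} {x y w : CounterConfig}

lemma b_zero : b 0 m = 0 := Pi.single_zero m

lemma vanishesBelow_add : VanishesBelow (x + y) m ↔ VanishesBelow x m ∧ VanishesBelow y m := by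
  simp only [VanishesBelow, Pi.add_apply, add_eq_zero, forall_and]

lemma vanishesBelow_succ : VanishesBelow x (m + 1) ↔ VanishesBelow x m ∧ x m = 0 :=
  Nat.forall_lt_succ_right

lemma not_vanishesBelow_add_tok (hmk : m < k) : ¬VanishesBelow (x + tok e m) k := by
  intro h
  simpa using congrArg Prod.fst ((vanishesBelow_add.1 h).2 m hmk)

lemma vanishesBelow_single_add (hmk : m ≤ k) (a : (Control → ℕ) × (Fin 4 → ℕ) × (Fin 4 → ℕ)) :
    VanishesBelow (Pi.single k a + x) m ↔ VanishesBelow x m := by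
  refine forall₂_congr fun i hi => ?_
  rw [Pi.add_apply, Pi.single_eq_of_ne (hi.trans_le hmk).ne, zero_add]

lemma hasValue_tok_add :
    HasValue (tok e m + w) m t ↔ control w m = 0 ∧ VanishesBelow w m ∧ t = e.value m := by
  have hctrl (a : Control) : control (tok e m + w) m = Pi.single a 1 ↔
      .endpoint e = a ∧ control w m = 0 := by
    simp [pi_single_one_add_eq_single_one_iff]
  constructor
  · rintro (⟨h, hlow⟩ | ⟨h, -⟩)
    · obtain ⟨⟨⟩, hw⟩ := (hctrl _).1 h
      exact ⟨hw, (vanishesBelow_single_add le_rfl _).1 hlow, rfl⟩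
    · exact absurd ((hctrl _).1 h).1 nofun
  · rintro ⟨hw, hlow, rfl⟩
    exact .endpoint ((hctrl _).2 ⟨rfl, hw⟩) ((vanishesBelow_single_add le_rfl _).2 hlow)

lemma hasValue_q_add_tok_add :
    HasValue (q j (m + 1) + tok e m + y) (m + 1) t ↔
      control y (m + 1) = 0 ∧ control y m = 0 ∧ selector y m = Pi.single j 1 ∧
        VanishesBelow y m ∧ PhaseValue (en m) j (counter y m + Pi.single j (e.value m)) t := by
  have hctrl (a : Control) : control (q j (m + 1) + tok e m + y) (m + 1) = Pi.single a 1 ↔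
      .phase j = a ∧ control y (m + 1) = 0 := by
    simp [pi_single_one_add_eq_single_one_iff]
  have hval (t' : ℕ) : HasValue (q j (m + 1) + tok e m + y) m t' ↔
      control y m = 0 ∧ VanishesBelow y m ∧ t' = e.value m := by
    rw [add_right_comm, add_comm _ (tok e m), hasValue_tok_add,
      vanishesBelow_single_add m.le_succ]
    simp
  constructor
  · rintro (⟨h, -⟩ | ⟨h, hsel, ht, hph⟩)
    · exact absurd ((hctrl _).1 h).1 nofun
    · obtain ⟨⟨⟩, hy⟩ := (hctrl _).1 h
      obtain ⟨hy', hlow, rfl⟩ := (hval _).1 ht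
      exact ⟨hy, hy', by simpa using hsel, hlow, by simpa using hph⟩
  · rintro ⟨hy, hy', hsel, hlow, hph⟩
    exact .phase ((hctrl _).2 ⟨rfl, hy⟩) (by simpa using hsel) ((hval _).2 ⟨hy', hlow, rfl⟩)
      (by simpa using hph)

lemma hasValue_q_add_b_add_c_add_tok_add {β : Fin 4 → ℕ} :
    HasValue (q j (m + 1) + b β m + c j m + tok e m + w) (m + 1) t ↔
      control w (m + 1) = 0 ∧ control w m = 0 ∧ selector w m = 0 ∧ VanishesBelow w m ∧
        PhaseValue (en m) j (β + counter w m + Pi.single j (e.value m)) t := by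
  rw [show q j (m + 1) + b β m + c j m + tok e m + w =
    q j (m + 1) + tok e m + (b β m + (c j m + w)) by abel, hasValue_q_add_tok_add,
    vanishesBelow_single_add le_rfl, vanishesBelow_single_add le_rfl]
  simp

end HasValue

section Reads

variable {k m n : ℕ} {i j : Fin 4} {β : Fin 4 → ℕ} {x y u v : CounterConfig}

lemma Reads.lift (hkm : k ≤ m) (hx : ¬VanishesBelow x (k + 1)) (hxy : ∀ l > k, x l = y l)
    (h : ∀ i β, Reads x k i β → Reads y k i β) (hread : Reads x m i β) : Reads y m i β := by
  induction m, hkm using Nat.le_induction generalizing i β with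
  | base => exact h i β hread
  | succ m hkm ih =>
    have hsucc : x (m + 1) = y (m + 1) := hxy _ (Nat.lt_succ_of_le hkm)
    obtain ⟨hsel, t, ht, rfl⟩ := hread
    refine ⟨by simpa [← hsucc] using hsel, t, ?_, by simp [← hsucc]⟩
    rcases ht with ⟨-, hlow⟩ | ⟨hctrl, hsel, ht, hph⟩
    · exact absurd (fun l hl => hlow l (by omega)) hx
    · obtain ⟨hsel', t', ht', hβ⟩ := ih ⟨hsel, _, ht, rfl⟩
      exact .phase (by simpa [← hsucc] using hctrl) hsel' ht' (hβ ▸ hph)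

/-- Two configurations are related if they can be exchanged inside every configuration without
affecting what is read at level `m`. -/
def readsCon (m : ℕ) : AddCon CounterConfig where
  r u v := ∀ w i β, Reads (u + w) m i β ↔ Reads (v + w) m i β
  iseqv :=
    ⟨fun _ _ _ _ => Iff.rfl, fun h w i β => (h w i β).symm,
      fun h h' w i β => (h w i β).trans (h' w i β)⟩
  add' {u v u' v'} h h' w i β := by
    rw [add_assoc, h, add_left_comm, h', add_left_comm, add_assoc]

lemma readsCon_of_hasValue_iff (h₂ : (u m).2 = (v m).2)
    (h : ∀ w t, HasValue (u + w) m t ↔ HasValue (v + w) m t) : readsCon m u v := by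
  intro w i β
  simp [Reads, h, h₂]

lemma readsCon_of_hasValue_add {r : ℕ} (hu : selector u m = Pi.single j 1)
    (hv : selector v m = Pi.single j 1) (huv : counter u m = counter v m + Pi.single j r)
    (h : ∀ w t, HasValue (v + w) m t ↔ ∃ t', t = t' + r ∧ HasValue (u + w) m t') :
    readsCon m u v := by
  intro w i β
  simp only [selector, counter] at hu hv huv
  simp only [Reads, selector, counter, Pi.add_apply, Prod.fst_add, Prod.snd_add, hu, hv,
    pi_single_one_add_eq_single_one_iff, h, huv]
  refine and_congr_right ?_
  rintro ⟨rfl, -⟩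
  constructor
  · rintro ⟨t, ht, rfl⟩
    exact ⟨t + r, ⟨t, rfl, ht⟩, by rw [Pi.single_add]; abel⟩
  · rintro ⟨_, ⟨t, rfl, ht⟩, rfl⟩
    exact ⟨t, ht, by rw [Pi.single_add]; abel⟩

lemma readsCon_mono (hmn : m ≤ n) (hu : ¬VanishesBelow u (m + 1)) (hv : ¬VanishesBelow v (m + 1))
    (huv : ∀ l > m, u l = v l) (h : readsCon m u v) : readsCon n u v := by
  have hlift {u v : CounterConfig} (hu : ¬VanishesBelow u (m + 1)) (huv : ∀ l > m, u l = v l)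
      (h : readsCon m u v) (w : CounterConfig) (i : Fin 4) (β : Fin 4 → ℕ)
      (hread : Reads (u + w) n i β) : Reads (v + w) n i β :=
    hread.lift hmn (fun hl => hu (vanishesBelow_add.1 hl).1) (fun l hl => by simp [huv l hl])
      fun i β => (h w i β).1
  exact fun w i β => ⟨hlift hu huv h w i β,
    hlift hv (fun l hl => (huv l hl).symm) (fun w i β => (h w i β).symm) w i β⟩

end Reads

section Rules

variable {m n : ℕ} {e e' : Endpoint} {j j' : Fin 4} {β β' : Fin 4 → ℕ}

lemma readsCon_phase_phase (hmn : m < n)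
    (h : ∀ γ t, PhaseValue (en m) j (β + γ + Pi.single j (e.value m)) t ↔
      PhaseValue (en m) j' (β' + γ + Pi.single j' (e'.value m)) t) :
    readsCon n (q j (m + 1) + b β m + c j m + tok e m)
      (q j' (m + 1) + b β' m + c j' m + tok e' m) := by
  refine readsCon_mono hmn (not_vanishesBelow_add_tok (by omega))
    (not_vanishesBelow_add_tok (by omega)) (fun l hl => ?_)
    (readsCon_of_hasValue_iff (by simp) fun w t => ?_)
  · have hlm : l ≠ m := by omega
    simp [hl.ne', hlm]
  · simp only [hasValue_q_add_b_add_c_add_tok_add, h]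

lemma readsCon_phase_tok (hmn : m < n)
    (h : ∀ (γ : Fin 4 → ℕ) t, PhaseValue (en m) j (γ + Pi.single j (en m)) t ↔
      γ = 0 ∧ t = e.value (m + 1)) :
    readsCon n (q j (m + 1) + c j m + tok .start m) (tok e (m + 1)) := by
  rw [← add_zero (q j (m + 1)), ← b_zero (m := m)]
  refine readsCon_mono hmn (not_vanishesBelow_add_tok (by omega))
    (zero_add (tok e (m + 1)) ▸ not_vanishesBelow_add_tok (by omega)) (fun l hl => ?_)
    (readsCon_of_hasValue_iff (by simp) fun w t => ?_)
  · have hlm : l ≠ m := by omega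
    simp [hl.ne', hlm]
  · simp only [hasValue_q_add_b_add_c_add_tok_add, hasValue_tok_add, vanishesBelow_succ,
      Endpoint.value, zero_add, h, Prod.ext_iff, control, selector, counter, Prod.fst_zero,
      Prod.snd_zero]
    tauto

lemma readsCon_count (hmn : m < n) :
    readsCon n (q 1 (m + 1) + b (Pi.single 2 1) m + b (Pi.single j 1) (m + 1) + c j (m + 1) +
        tok .finish m)
      (q 1 (m + 1) + b (Pi.single 1 1) m + c j (m + 1) + tok .finish m) := by
  refine readsCon_mono hmn (not_vanishesBelow_add_tok (by omega))
    (not_vanishesBelow_add_tok (by omega)) (fun l hl => ?_)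
    (readsCon_of_hasValue_add (j := j) (r := 1) (by simp) (by simp) (by simp) fun w t => ?_)
  · have hlm : l ≠ m := by omega
    simp [hl.ne', hlm]
  · rw [show q 1 (m + 1) + b (Pi.single 1 1) m + c j (m + 1) + tok .finish m + w =
        q 1 (m + 1) + tok .finish m + (b (Pi.single 1 1) m + (c j (m + 1) + w)) by abel,
      show q 1 (m + 1) + b (Pi.single 2 1) m + b (Pi.single j 1) (m + 1) + c j (m + 1) +
          tok .finish m + w = q 1 (m + 1) + tok .finish m +
        (b (Pi.single 2 1) m + (b (Pi.single j 1) (m + 1) + (c j (m + 1) + w))) by abel]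
    simp only [hasValue_q_add_tok_add, vanishesBelow_single_add le_rfl,
      vanishesBelow_single_add m.le_succ]
    simp only [control, selector, counter, Pi.add_apply, Prod.fst_add, Prod.snd_add,
      Pi.single_eq_same, Pi.single_eq_of_ne m.lt_succ_self.ne,
      Pi.single_eq_of_ne m.lt_succ_self.ne', zero_add,
      Endpoint.value, Pi.single_zero, add_zero, phaseValue_one_succ]
    tauto

lemma readsCon_double :
    readsCon n (b (Pi.single j 1) 0 + b (Pi.single j 1) 0 + c j 0 + tok .finish 0)
      (c j 0 + tok .start 0) := by
  refine readsCon_mono n.zero_le (not_vanishesBelow_add_tok (by omega))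
    (not_vanishesBelow_add_tok (by omega)) (fun l hl => ?_)
    (readsCon_of_hasValue_add (j := j) (r := 2) (by simp) (by simp) (by simp [← Pi.single_add])
      fun w t => ?_)
  · simp [hl.ne']
  · rw [add_right_comm, add_comm _ (tok .start 0), add_right_comm, add_comm _ (tok .finish 0)]
    have hlow (x : CounterConfig) : VanishesBelow x 0 := fun k hk => absurd hk k.not_lt_zero
    simp [hasValue_tok_add, hlow, Endpoint.value, en, and_comm]

end Rules

lemma reads_b_add_c_add_tok {n : ℕ} {i : Fin 4} {e : Endpoint} {β : Fin 4 → ℕ} :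
    Reads (b β n + c i n + tok e n) n i (β + Pi.single i (e.value n)) := by
  refine ⟨by simp, e.value n, ?_, by simp⟩
  rw [add_comm, hasValue_tok_add, vanishesBelow_add]
  refine ⟨by simp, ⟨fun k hk => ?_, fun k hk => ?_⟩, rfl⟩ <;> simp [hk.ne]

lemma Reads.value_le {n : ℕ} {i : Fin 4} {e : Endpoint} {β : Fin 4 → ℕ} {x : CounterConfig}
    (h : Reads (tok e n + x) n i β) : e.value n ≤ β i := by
  obtain ⟨-, t, ht, rfl⟩ := h
  simp [(hasValue_tok_add.1 ht).2.2]

lemma not_readsCon_of_lt {n : ℕ} {i : Fin 4} {β : Fin 4 → ℕ} (hβ : β i < en n)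
    (x : CounterConfig) :
    ¬readsCon n (b β n + c i n + tok .finish n) (c i n + tok .start n + x) := by
  intro h
  have hread : Reads (c i n + tok .start n + x + 0) n i (β + Pi.single i 0) :=
    (h 0 i _).1 reads_b_add_c_add_tok
  rw [add_zero, add_comm (c i n), add_assoc, Pi.single_zero, add_zero] at hread
  exact hβ.not_ge hread.value_le

lemma not_readsCon_b {n : ℕ} {i : Fin 4} {e : Endpoint} (β : Fin 4 → ℕ) (x : CounterConfig) :
    ¬readsCon n (b β n) (c i n + tok e n + x) := by
  intro h
  have hread : Reads (c i n + tok e n + x + (c i n + tok .finish n)) n i (β + Pi.single i 0) :=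
    (h _ i _).1 (add_assoc (b β n) _ _ ▸ reads_b_add_c_add_tok)
  have hsel := congrFun hread.1 i
  simp at hsel

/-- The monomial in `V_0, V_1, …` substituted for a variable, chosen such that the two terms of each
binomial in `P̄ ∪ G` become equal. -/
noncomputable def ofVar (n : ℕ) : MVar n → CounterConfig
  | .vs | .vS true _ | .vF true _ => c 3 n + tok .start n
  | .vl => c 3 n + tok .finish n
  | .vc | .vcb => b (Pi.single 3 1) n
  | .vb | .vbb | .vQ true _ _ | .vC true _ _ | .vB true _ _ => 0
  | .vS false i => tok .start i
  | .vF false i => tok .finish i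
  | .vQ false j i => q j i
  | .vC false j i => c j i
  | .vB false j i => b (Pi.single j 1) i

/-- The class modulo `readsCon n` of a monomial in which the variables have been replaced according
to `ofVar n`. -/
noncomputable def readout (n : ℕ) : Mon (MVar n) →+ (readsCon n).Quotient :=
  (readsCon n).mk'.comp (Finsupp.weight (ofVar n))

lemma monomialHom_readout_X {n : ℕ} (x : MVar n) :
    monomialHom (ZMod 2) (readout n) (X x) =
      AddMonoidAlgebra.single (ofVar n x : (readsCon n).Quotient) 1 := by
  simp [readout, Finsupp.weight_single, AddCon.coe_mk']

lemma single_add_single_eq_zero_of_readsCon {n : ℕ} {u v : CounterConfig} (h : readsCon n u v) :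
    AddMonoidAlgebra.single (u : (readsCon n).Quotient) (1 : ZMod 2) +
      AddMonoidAlgebra.single (v : (readsCon n).Quotient) 1 = 0 :=
  single_add_single_eq_zero ((readsCon n).eq.2 h)

lemma monomialHom_readout_P0 {n : ℕ} {bar : Bool} {p : MPoly n} (hp : p ∈ P0 n bar) :
    monomialHom (ZMod 2) (readout n) p = 0 := by
  obtain ⟨j, rfl⟩ := hp
  simp only [map_add, map_mul, sq, monomialHom_readout_X, AddMonoidAlgebra.single_mul_single,
    mul_one, ← AddCon.coe_add]
  refine single_add_single_eq_zero_of_readsCon ?_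
  cases bar
  · exact readsCon_double
  · exact (readsCon n).refl _

lemma monomialHom_readout_Pm_true {n : ℕ} {i : Fin n} {p : MPoly n} (hp : p ∈ Pm n true i) :
    monomialHom (ZMod 2) (readout n) p = 0 := by
  obtain (rfl | rfl | rfl | rfl | rfl | rfl) | ⟨j, rfl⟩ := hp
  all_goals
    simp only [map_add, map_mul, monomialHom_readout_X, AddMonoidAlgebra.single_mul_single,
      mul_one, ← AddCon.coe_add, ofVar, zero_add]
    exact single_add_single_eq_zero rfl

lemma monomialHom_readout_Pm_false {n : ℕ} {i : Fin n} {p : MPoly n} (hp : p ∈ Pm n false i) :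
    monomialHom (ZMod 2) (readout n) p = 0 := by
  obtain (rfl | rfl | rfl | rfl | rfl | rfl) | ⟨j, rfl⟩ := hp
  all_goals
    simp only [map_add, map_mul, monomialHom_readout_X, AddMonoidAlgebra.single_mul_single,
      mul_one, ← AddCon.coe_add, ofVar, Fin.val_succ, Fin.val_castSucc]
    refine single_add_single_eq_zero_of_readsCon ?_
  · refine readsCon_phase_tok (e := .start) i.2 fun γ t => ?_
    rw [Endpoint.value, en_succ, phaseValue_zero_start]
  · simpa only [b_zero, add_zero] using
      readsCon_phase_phase (e := .start) (e' := .finish) (β := 0) i.2 fun γ t => by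
        simpa [Endpoint.value] using phaseValue_one_start_iff_zero_finish
  · simpa only [b_zero, add_zero] using
      readsCon_phase_phase (e := .finish) (e' := .finish) (β := 0) (β' := 0) i.2 fun γ t => by
        simp [Endpoint.value, PhaseValue]
  · exact readsCon_phase_phase (e := .start) (e' := .start) i.2 fun γ t =>
      phaseValue_two_start_iff_one_start
  · simpa only [b_zero, add_zero] using
      readsCon_phase_phase (e := .finish) (e' := .start) (β' := 0) i.2 fun γ t => by
        simpa [Endpoint.value] using phaseValue_three_finish_iff_two_start
  · exact readsCon_phase_tok (e := .finish) i.2 fun γ t => phaseValue_three_start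
  · exact readsCon_count i.2

lemma monomialHom_readout_GG {n : ℕ} {p : MPoly n} (hp : p ∈ GG n) :
    monomialHom (ZMod 2) (readout n) p = 0 := by
  obtain rfl | rfl | rfl | rfl | rfl | rfl | rfl := hp
  all_goals
    simp only [map_add, map_mul, monomialHom_readout_X, AddMonoidAlgebra.single_mul_single,
      mul_one, ← AddCon.coe_add, ofVar, add_zero, add_comm]
    exact single_add_single_eq_zero rfl

lemma monomialHom_readout_FF {n : ℕ} {p : MPoly n} (hp : p ∈ FF n) :
    monomialHom (ZMod 2) (readout n) p = 0 := by
  obtain ((hp | hp) | (hp | hp)) | hp := hp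
  · exact monomialHom_readout_P0 hp
  · obtain ⟨i, hp⟩ := Set.mem_iUnion.1 hp
    exact monomialHom_readout_Pm_false hp
  · exact monomialHom_readout_P0 hp
  · obtain ⟨i, hp⟩ := Set.mem_iUnion.1 hp
    exact monomialHom_readout_Pm_true hp
  · exact monomialHom_readout_GG hp

lemma readsCon_weight_of_add_mem_span {n : ℕ} {α γ : Mon (MVar n)}
    (h : (monomial α 1 + monomial γ 1 : MPoly n) ∈ Ideal.span (FF n)) :
    readsCon n (Finsupp.weight (ofVar n) α) (Finsupp.weight (ofVar n) γ) := by
  rw [← CharTwo.sub_eq_add] at h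
  exact (readsCon n).eq.1 <|
    map_eq_map_of_monomial_sub_monomial_mem_span (readout n) (fun _ => monomialHom_readout_FF) h

lemma weight_ofVar_vl_add_vcb_add_vc {n j m₁ m₂ : ℕ} :
    Finsupp.weight (ofVar n)
        (Finsupp.single .vl j + Finsupp.single .vcb m₁ + Finsupp.single .vc m₂) =
      b (Pi.single 3 (m₁ + m₂)) n + j • (c 3 n + tok .finish n) := by
  have hb (k : ℕ) : k • b (Pi.single 3 1) n = b (Pi.single 3 k) n := by
    simp [← Pi.single_smul]
  simp only [map_add, Finsupp.weight_single, ofVar, hb]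
  rw [add_assoc, add_comm, ← Pi.single_add, Prod.mk_add_mk, Prod.mk_add_mk, ← Pi.single_add]
  rfl

lemma not_readsCon_weight_of_mem_Dmon {n : ℕ} {α : Mon (MVar n)} (hα : α ∈ Dmon n)
    (δ : Mon (MVar n)) :
    ¬readsCon n (Finsupp.weight (ofVar n) α) (Finsupp.weight (ofVar n)
      (Finsupp.single (.vC false 3 (Fin.last n)) 1 + Finsupp.single (.vS false (Fin.last n)) 1 +
        δ)) := by
  obtain ⟨j, m₁, m₂, hj, hle, rfl⟩ := hα
  have hweight : Finsupp.weight (ofVar n) (Finsupp.single (.vC false 3 (Fin.last n)) 1 +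
      Finsupp.single (.vS false (Fin.last n)) 1 + δ) =
        c 3 n + tok .start n + Finsupp.weight (ofVar n) δ := by
    simp [Finsupp.weight_single, ofVar]
  rw [weight_ofVar_vl_add_vcb_add_vc, hweight]
  obtain rfl | rfl : j = 0 ∨ j = 1 := by omega
  · rw [zero_smul, add_zero]
    exact not_readsCon_b _ _
  · rw [one_smul, ← add_assoc]
    refine not_readsCon_of_lt ?_ _
    rw [Pi.single_eq_same]
    omega

end CounterConfig

open MVar in
/-- For `α ∈ D` and any monomial `γ` with `α + γ ∈ ⟨𝓕⟩`, the monomial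
`c_{4n} s_n` does not divide `γ`. -/
theorem stmt12 (n : ℕ) (α : Mon (MVar n)) (hα : α ∈ Dmon n) (γ : Mon (MVar n))
    (h : (monomial α 1 + monomial γ 1 : MPoly n) ∈ Ideal.span (FF n)) :
    ¬ (Finsupp.single (vC false 3 (Fin.last n)) 1
        + Finsupp.single (vS false (Fin.last n)) 1 ≤ γ) := by
  intro hdvd
  obtain ⟨δ, rfl⟩ := exists_add_of_le hdvd
  exact CounterConfig.not_readsCon_weight_of_mem_Dmon hα δ
    (CounterConfig.readsCon_weight_of_add_mem_span h)
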